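/- arXiv:1605.07061 — 5 statements merged into one kernel-verified Lean document; each statement's English description precedes it below -/
import Mathlib

section
/- Let M ∈ ℝ_+^{6×8} be the matrix with rows (0,0,0,0,1,1,1,1), (1,1,1,1,0,0,0,0), (0,0,1,1,0,0,1,1), (1,1,0,0,1,1,0,0), (0,1,0,1,0,1,0,1), (1,0,1,0,1,0,1,0). Then rank(M) = 4 and rrk+(M) = 8. -/
open Matrix

/-- The restricted nonnegative rank: the smallest inner dimension of a nonnegative
factorization `M = W * H` with `rank W = rank M`. -/
noncomputable def rrkPos {n m : ℕ} (M : Matrix (Fin n) (Fin m) ℝ) : ℕ :=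
  sInf {d : ℕ | ∃ W : Matrix (Fin n) (Fin d) ℝ, ∃ H : Matrix (Fin d) (Fin m) ℝ,
    (∀ i k, 0 ≤ W i k) ∧ (∀ k j, 0 ≤ H k j) ∧ M = W * H ∧ W.rank = M.rank}

/-- The `6 × 8` matrix corresponding to the 3D-cube nested polytope problem. -/
noncomputable def cubeMatrix : Matrix (Fin 6) (Fin 8) ℝ :=
  !![0, 0, 0, 0, 1, 1, 1, 1;
     1, 1, 1, 1, 0, 0, 0, 0;
     0, 0, 1, 1, 0, 0, 1, 1;
     1, 1, 0, 0, 1, 1, 0, 0;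
     0, 1, 0, 1, 0, 1, 0, 1;
     1, 0, 1, 0, 1, 0, 1, 0]

/-!
Geometrically, the nonnegative vectors in the column space of `M` form a polyhedral cone, and the
columns of `W` in a restricted factorization `M = W * H` lie in that cone. A column `j` of `M` is
a nonnegative combination of columns of `W`, and those with a positive coefficient must lie in the
smallest face containing column `j`. So if the faces belonging to distinct columns meet only in `0`,
then `W` needs a separate column for each column of `M`, and the trivial factorization `M = M * 1`
is optimal.

The `6 × 8` matrix is the slack matrix of the cube: rows are facets, columns are vertices and the
entries are distances. In its column space the two entries at opposite facets have the same sum for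
each direction. Distinct vertices lie on opposite facets in some direction, so a nonnegative
vector in both of their faces has one such sum equal to `0`, hence all of them, and vanishes.
-/

section NonnegativeFactorization

variable {n m l K : Type*} [Fintype m] [Fintype l] [Field K]

lemma range_mulVecLin_mul_eq_of_rank_eq [Finite n] {A : Matrix n l K} {B : Matrix l m K}
    (h : A.rank = (A * B).rank) :
    LinearMap.range (A * B).mulVecLin = LinearMap.range A.mulVecLin := by
  refine Submodule.eq_of_le_of_finrank_eq ?_ h.symm
  rw [mulVecLin_mul]
  exact LinearMap.range_comp_le_range _ _

variable [LinearOrder K]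

/-- The smallest face containing the nonnegative column `j` of `M`, within the cone of nonnegative
vectors in the column space of `M`. It is cut out by the coordinates vanishing on that column. -/
def columnFace (M : Matrix n m K) (j : m) : Set (n → K) :=
  {y | y ∈ LinearMap.range M.mulVecLin ∧ 0 ≤ y ∧ ∀ i, M i j = 0 → y i = 0}

lemma columnFace_submatrix {n' m' : Type*} [Fintype m'] (M : Matrix n m K) (e : n' ≃ n)
    (f : m' ≃ m) (j : m') :
    columnFace (M.submatrix e f) j = (· ∘ e.symm) ⁻¹' columnFace M (f j) := by
  have h_range (y : n' → K) : y ∈ LinearMap.range (M.submatrix e f).mulVecLin ↔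
      y ∘ e.symm ∈ LinearMap.range M.mulVecLin := by
    simp only [LinearMap.mem_range, mulVecLin_apply, submatrix_mulVec_equiv,
      Equiv.eq_comp_symm]
    exact ⟨fun ⟨v, hv⟩ => ⟨v ∘ f.symm, hv⟩, fun ⟨v, hv⟩ => ⟨v ∘ f, by
      rwa [Function.comp_assoc v, f.self_comp_symm, Function.comp_id]⟩⟩
  ext y
  refine and_congr (h_range y) (and_congr ?_ ?_) <;> refine e.forall_congr_left.trans ?_
  · rfl
  · simp only [submatrix_apply, e.apply_symm_apply, Function.comp_apply]

variable [IsStrictOrderedRing K]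

lemma exists_col_mem_columnFace [Finite n] {W : Matrix n l K} {H : Matrix l m K}
    (hW : ∀ i k, 0 ≤ W i k) (hH : ∀ k j, 0 ≤ H k j) (hrank : W.rank = (W * H).rank) {j : m}
    (hj : (W * H).col j ≠ 0) : ∃ k, W.col k ≠ 0 ∧ W.col k ∈ columnFace (W * H) j := by
  classical
  obtain ⟨i, hi⟩ := Function.ne_iff.mp hj
  obtain ⟨k, -, hk⟩ := Finset.exists_ne_zero_of_sum_ne_zero hi
  refine ⟨k, fun h => left_ne_zero_of_mul hk (congrFun h i), ?_, fun i => hW i k, fun r hr => ?_⟩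
  · rw [range_mulVecLin_mul_eq_of_rank_eq hrank]
    exact ⟨Pi.single k 1, mulVec_single_one W k⟩
  · have hterms := (Finset.sum_eq_zero_iff_of_nonneg fun t _ => mul_nonneg (hW r t) (hH t j)).mp hr
    exact (mul_eq_zero.mp (hterms k (Finset.mem_univ k))).resolve_right (right_ne_zero_of_mul hk)

theorem card_le_card_of_pairwise_columnFace_inter_subset_zero [Finite n] {W : Matrix n l K}
    {H : Matrix l m K} (hW : ∀ i k, 0 ≤ W i k) (hH : ∀ k j, 0 ≤ H k j)
    (hrank : W.rank = (W * H).rank) (hcol : ∀ j, (W * H).col j ≠ 0)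
    (hface : Pairwise fun i j => columnFace (W * H) i ∩ columnFace (W * H) j ⊆ {0}) :
    Fintype.card m ≤ Fintype.card l := by
  choose k hk_ne hk_mem using fun j => exists_col_mem_columnFace hW hH hrank (hcol j)
  refine Fintype.card_le_of_injective k fun i j hij => ?_
  by_contra h_ne
  exact hk_ne i (hface h_ne ⟨hk_mem i, hij ▸ hk_mem j⟩)

end NonnegativeFactorization

theorem rrkPos_eq_of_pairwise_columnFace_inter_subset_zero {p q : ℕ} {M : Matrix (Fin p) (Fin q) ℝ}
    (hM : ∀ i j, 0 ≤ M i j) (hcol : ∀ j, M.col j ≠ 0)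
    (hface : Pairwise fun i j => columnFace M i ∩ columnFace M j ⊆ {0}) : rrkPos M = q := by
  refine IsLeast.csInf_eq ⟨⟨M, 1, hM, fun i j => ?_, (Matrix.mul_one M).symm, rfl⟩, ?_⟩
  · rw [one_apply]
    split_ifs <;> norm_num
  · rintro d ⟨W, H, hW, hH, rfl, hrank⟩
    simpa using card_le_card_of_pairwise_columnFace_inter_subset_zero hW hH hrank hcol hface

section Hypercube

variable (ι : Type*)

/-- The slack matrix of the hypercube `[0, 1] ^ ι`: the entry at the facet `x b = s`, indexed by
`(b, s)`, and the vertex `x` is the distance from the vertex to the facet. -/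
def hypercubeSlack : Matrix (ι × Fin 2) (ι → Fin 2) ℝ :=
  of fun i x => if x i.1 = i.2 then 0 else 1

variable {ι}

lemma hypercubeSlack_nonneg (i : ι × Fin 2) (x : ι → Fin 2) : 0 ≤ hypercubeSlack ι i x := by
  unfold hypercubeSlack
  rw [of_apply]
  split_ifs <;> norm_num

lemma hypercubeSlack_opposite_add (b : ι) (x : ι → Fin 2) :
    hypercubeSlack ι (b, 0) x + hypercubeSlack ι (b, 1) x = 1 := by
  rcases Fin.exists_fin_two.mp ⟨x b, rfl⟩ with h | h <;> simp [hypercubeSlack, h]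

lemma col_hypercubeSlack_ne_zero [Nonempty ι] (x : ι → Fin 2) : (hypercubeSlack ι).col x ≠ 0 := by
  obtain ⟨b⟩ := ‹Nonempty ι›
  intro h
  have h_sum := hypercubeSlack_opposite_add b x
  have h_zero (s : Fin 2) : hypercubeSlack ι (b, s) x = 0 := congrFun h (b, s)
  simp [h_zero] at h_sum

/-- The standard basis of the affine functions on `ℝ ^ ι`, restricted to the vertices of the
hypercube: the constant `1` at `none` and the coordinate `b` at `some b`. -/
def hypercubeAffineBasis (ι : Type*) (o : Option ι) : (ι → Fin 2) → ℝ :=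
  o.elim 1 fun b => (hypercubeSlack ι).row (b, 0)

lemma span_range_row_hypercubeSlack [Nonempty ι] :
    Submodule.span ℝ (Set.range (hypercubeSlack ι).row) =
      Submodule.span ℝ (Set.range (hypercubeAffineBasis ι)) := by
  have h_opposite (b : ι) : (hypercubeSlack ι).row (b, 0) + (hypercubeSlack ι).row (b, 1) = 1 :=
    funext (hypercubeSlack_opposite_add b)
  apply le_antisymm <;> refine Submodule.span_le.mpr (Set.range_subset_iff.mpr ?_)
  · have h_mem (o : Option ι) := Submodule.subset_span (R := ℝ)
      (Set.mem_range_self (f := hypercubeAffineBasis ι) o)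
    refine Prod.forall.mpr fun b => Fin.forall_fin_two.mpr ⟨h_mem (some b), ?_⟩
    rw [eq_sub_of_add_eq' (h_opposite b)]
    exact sub_mem (h_mem none) (h_mem (some b))
  · have h_mem (i : ι × Fin 2) := Submodule.subset_span (R := ℝ)
      (Set.mem_range_self (f := (hypercubeSlack ι).row) i)
    obtain ⟨b⟩ := ‹Nonempty ι›
    refine Option.forall.mpr ⟨?_, fun c => h_mem (c, 0)⟩
    change 1 ∈ _
    rw [← h_opposite b]
    exact add_mem (h_mem (b, 0)) (h_mem (b, 1))

lemma linearIndependent_hypercubeAffineBasis [Finite ι] :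
    LinearIndependent ℝ (hypercubeAffineBasis ι) := by
  classical
  cases nonempty_fintype ι
  refine Fintype.linearIndependent_iff.mpr fun a ha => ?_
  have h_eval (x : ι → Fin 2) : a none + ∑ b, a (some b) * hypercubeSlack ι (b, 0) x = 0 := by
    simpa [hypercubeAffineBasis, Fintype.sum_option] using congrFun ha x
  have h_none : a none = 0 := by simpa [hypercubeSlack] using h_eval 0
  rintro (_ | b)
  · exact h_none
  · simpa [hypercubeSlack, h_none, Pi.single_apply] using h_eval (Pi.single b 1)

variable [Fintype ι] [DecidableEq ι]

theorem rank_hypercubeSlack [Nonempty ι] : (hypercubeSlack ι).rank = Fintype.card ι + 1 := by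
  rw [rank_eq_finrank_span_row, span_range_row_hypercubeSlack,
    finrank_span_eq_card linearIndependent_hypercubeAffineBasis, Fintype.card_option]

lemma hypercubeSlack_mulVec_opposite_add (v : (ι → Fin 2) → ℝ) (b : ι) :
    (hypercubeSlack ι *ᵥ v) (b, 0) + (hypercubeSlack ι *ᵥ v) (b, 1) = ∑ x, v x := by
  simp only [mulVec, dotProduct, ← Finset.sum_add_distrib, ← add_mul,
    hypercubeSlack_opposite_add, one_mul]

lemma pairwise_columnFace_hypercubeSlack_inter_subset_zero :
    Pairwise fun x y : ι → Fin 2 =>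
      columnFace (hypercubeSlack ι) x ∩ columnFace (hypercubeSlack ι) y ⊆ {0} := by
  rintro x y hxy _ ⟨⟨⟨v, rfl⟩, h_nonneg, hx⟩, -, -, hy⟩
  rw [mulVecLin_apply] at h_nonneg ⊢
  obtain ⟨b, hb⟩ := Function.ne_iff.mp hxy
  have h_zero (s : Fin 2) : (hypercubeSlack ι *ᵥ v) (b, s) = 0 := by
    have hs : x b = s ∨ y b = s := by omega
    exact hs.elim (fun h => hx _ (if_pos h)) (fun h => hy _ (if_pos h))
  have h_sum : ∑ x, v x = 0 := by
    rw [← hypercubeSlack_mulVec_opposite_add v b, h_zero, h_zero, add_zero]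
  rw [Set.mem_singleton_iff]
  funext ⟨c, s⟩
  have hc : ∀ s, (hypercubeSlack ι *ᵥ v) (c, s) = 0 := by
    rw [Fin.forall_fin_two, ← add_eq_zero_iff_of_nonneg (h_nonneg (c, 0)) (h_nonneg (c, 1)),
      hypercubeSlack_mulVec_opposite_add, h_sum]
  exact hc s

end Hypercube

theorem rrkPos_submatrix_hypercubeSlack {ι : Type*} [Finite ι] [Nonempty ι] {p q : ℕ}
    (e : Fin p ≃ ι × Fin 2) (f : Fin q ≃ (ι → Fin 2)) :
    rrkPos ((hypercubeSlack ι).submatrix e f) = q := by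
  classical
  cases nonempty_fintype ι
  refine rrkPos_eq_of_pairwise_columnFace_inter_subset_zero
    (fun i j => hypercubeSlack_nonneg (e i) (f j)) (fun j h => ?_) ?_
  · exact col_hypercubeSlack_ne_zero (f j) (funext (e.forall_congr_right.mp (congrFun h)))
  · intro i j hij y hy
    rw [columnFace_submatrix, columnFace_submatrix] at hy
    have h_zero : y ∘ e.symm = 0 :=
      pairwise_columnFace_hypercubeSlack_inter_subset_zero (f.injective.ne hij) hy
    exact funext (e.symm.forall_congr_right.mp (congrFun h_zero))

/-- The vertices of the cube in the order of the columns of `cubeMatrix`: the coordinates of vertex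
`j` are the binary digits of `j`, the leading one first. -/
def cubeVertex : Fin 8 ≃ (Fin 3 → Fin 2) :=
  (finFunctionFinEquiv (m := 2) (n := 3)).symm.trans (Equiv.arrowCongr Fin.revPerm (Equiv.refl _))

lemma cubeMatrix_eq_submatrix_hypercubeSlack :
    cubeMatrix = (hypercubeSlack (Fin 3)).submatrix finProdFinEquiv.symm cubeVertex := by
  ext i j
  fin_cases i <;> fin_cases j <;> rfl

/-- For the 3D-cube matrix `M`, one has `rank M = 4` and `rrk+(M) = 8`. -/
theorem stmt1 : cubeMatrix.rank = 4 ∧ rrkPos cubeMatrix = 8 := by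
  rw [cubeMatrix_eq_submatrix_hypercubeSlack]
  refine ⟨?_, rrkPos_submatrix_hypercubeSlack _ _⟩
  rw [rank_submatrix, rank_hypercubeSlack, Fintype.card_fin]
end

section
/- Let r, n, m, d ∈ ℕ, A ∈ ℚ^{n×(r−1)}, b ∈ ℚ^n be such that P = {x ∈ ℝ^{r−1} : Ax + b ≥ 0} is bounded and the augmented matrix (A b) ∈ ℚ^{n×r} has rank r. Let s_1, …, s_m ∈ ℚ^{r−1} be points of P whose convex hull S is full-dimensional (i.e., has nonempty interior in ℝ^{r−1}), and define M ∈ ℚ^{n×m} by M^j = A s_j + b for each j. Suppose q_1, …, q_d ∈ ℝ^{r−1} satisfy S ⊆ conv{q_1, …, q_d} ⊆ P. Define W ∈ ℝ^{n×d} by W^i = A q_i + b. Then W is nonnegative, there exists a column-stochastic matrix H ∈ ℝ_+^{d×m} with M = W·H and rank(W) = rank(M); moreover, if all q_i are rational, then W and H are rational. -/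
open Matrix Set

/-!
Every inner point `s j` is a convex combination of the points `q k`. An affine map preserves convex
combinations, so the columns `A (s j) + b` of `M` are the same convex combinations of the columns
of `W`; the weights form `H`. In the other direction every `q k` is an affine combination of the
`s j`, because these affinely span the space, so `W` is also `M` times some matrix and the two ranks
agree. For rationality, choose the weights by Carathéodory's theorem, with affinely independent
support. They are then the unique solution of a linear system with rational coefficients, and
a `ℚ`-linear retraction `ℝ → ℚ` maps a solution to a rational solution.
-/

section ConvexWeights

variable {L : Type*} [Field L] [LinearOrder L] [IsStrictOrderedRing L]
  {E : Type*} [AddCommGroup E] [Module L E] {κ : Type*} [Fintype κ]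

theorem exists_mem_stdSimplex_affineIndependent_support {q : κ → E} {p : E}
    (hp : p ∈ convexHull L (range q)) :
    ∃ w ∈ stdSimplex L κ, ∑ k, w k • q k = p ∧
      AffineIndependent L fun k : Function.support w => q k := by
  obtain ⟨ι, _, z, w, hzq, hz, hw_pos, hw_sum, hwz⟩ := eq_pos_convex_span_of_mem_convexHull hp
  choose f hf using fun i => hzq (mem_range_self i)
  have hf_inj : Function.Injective f := fun i i' h => hz.injective (by rw [← hf, ← hf, h])
  let c : κ → L := Function.extend f w 0
  have hc (i : ι) : c (f i) = w i := hf_inj.extend_apply w 0 i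
  have hc_zero (k : κ) (hk : k ∉ range f) : c k = 0 := Function.extend_apply' _ _ _ hk
  refine ⟨c, ⟨fun k => ?_, ?_⟩, ?_, ?_⟩
  · by_cases hk : k ∈ range f
    · obtain ⟨i, rfl⟩ := hk
      exact (hc i).symm ▸ (hw_pos i).le
    · exact (hc_zero k hk).ge
  · rw [← hw_sum]
    exact (Fintype.sum_of_injective f hf_inj _ _ hc_zero fun i => (hc i).symm).symm
  · rw [← hwz]
    refine (Fintype.sum_of_injective f hf_inj _ _ (fun k hk => ?_) fun i => ?_).symm
    · rw [hc_zero k hk, zero_smul]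
    · rw [hc, hf]
  · have hsupp (k : Function.support c) : ∃ i, f i = k :=
      not_imp_comm.1 (hc_zero k) k.2
    choose g hg using hsupp
    have hg_inj : Function.Injective g := fun k k' h => Subtype.ext (by rw [← hg, ← hg, h])
    have hqg : (fun k : Function.support c => q k) = z ∘ g :=
      funext fun k => by rw [Function.comp_apply, ← hf, hg]
    exact hqg ▸ hz.comp_embedding ⟨g, hg_inj⟩

end ConvexWeights

section RationalWeights

variable {K L : Type*} [Field K] [Field L] [Algebra K L] {ι κ : Type*} [Fintype κ]
  {v : κ → ι → K} {p : ι → K} {w : κ → L}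

theorem weights_mem_range_algebraMap_of_affineIndependent
    (hv : AffineIndependent L fun k => algebraMap K L ∘ v k) (hw : ∑ k, w k = 1)
    (hwp : ∑ k, w k • (algebraMap K L ∘ v k) = algebraMap K L ∘ p) (k : κ) :
    w k ∈ range (algebraMap K L) := by
  obtain ⟨π, hπ⟩ := LinearMap.exists_leftInverse_of_injective (Algebra.linearMap K L)
    (LinearMap.ker_eq_bot.2 (algebraMap K L).injective)
  have hπ_algebraMap (c : K) : π (algebraMap K L c) = c := LinearMap.congr_fun hπ c
  have hπ_mul (y : L) (c : K) : π (y * algebraMap K L c) = π y * c := by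
    rw [mul_comm, ← Algebra.smul_def, map_smul, smul_eq_mul, mul_comm]
  have hπw : ∑ k, algebraMap K L (π (w k)) = 1 := by
    rw [← map_sum, ← map_sum, hw, ← map_one (algebraMap K L), hπ_algebraMap]
  have hπwp : ∑ k, algebraMap K L (π (w k)) • (algebraMap K L ∘ v k) = algebraMap K L ∘ p := by
    ext x
    have hx : ∑ k, w k * algebraMap K L (v k x) = algebraMap K L (p x) := by
      simpa only [Finset.sum_apply, Pi.smul_apply, smul_eq_mul, Function.comp_apply]
        using congrFun hwp x
    simp only [Finset.sum_apply, Pi.smul_apply, smul_eq_mul, Function.comp_apply, ← map_mul,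
      ← hπ_mul, ← map_sum, hx, hπ_algebraMap]
  have huniq : w = fun k => algebraMap K L (π (w k)) := by
    refine (affineIndependent_iff_eq_of_fintype_affineCombination_eq L _).1 hv _ _ hw hπw ?_
    rw [Finset.affineCombination_eq_linear_combination _ _ _ hw,
      Finset.affineCombination_eq_linear_combination _ _ _ hπw, hwp, hπwp]
  exact ⟨π (w k), (congrFun huniq k).symm⟩

theorem weights_mem_range_algebraMap_of_affineIndependent_support
    (hv : AffineIndependent L fun k : Function.support w => algebraMap K L ∘ v k)
    (hw : ∑ k, w k = 1) (hwp : ∑ k, w k • (algebraMap K L ∘ v k) = algebraMap K L ∘ p) (k : κ) :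
    w k ∈ range (algebraMap K L) := by
  classical
  have hw_zero (k : κ) (hk : k ∉ range (Subtype.val : Function.support w → κ)) : w k = 0 := by
    simpa using hk
  by_cases hk : w k = 0
  · exact ⟨0, by rw [hk, map_zero]⟩
  · refine weights_mem_range_algebraMap_of_affineIndependent (p := p) hv
      (w := fun k : Function.support w => w k) ?_ ?_ ⟨k, hk⟩
    · rw [← hw]
      exact Fintype.sum_of_injective _ Subtype.val_injective _ _ hw_zero fun _ => rfl
    · rw [← hwp]
      exact Fintype.sum_of_injective _ Subtype.val_injective _ _
        (fun k hk => by rw [hw_zero k hk, zero_smul]) fun _ => rfl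

end RationalWeights

section SlackMatrix

variable {R : Type*} {n ι κ μ : Type*} [Fintype ι]

/-- The slack matrix of the points `v k` with respect to the polyhedron `{x | 0 ≤ A x + b}`: its
`k`-th column is `A (v k) + b`, so it is nonnegative exactly when all points lie in the
polyhedron. -/
def slackMatrix [NonUnitalNonAssocSemiring R] (A : Matrix n ι R) (b : n → R) (v : κ → ι → R) :
    Matrix n κ R :=
  of fun i k => (A *ᵥ v k) i + b i

theorem slackMatrix_map {S : Type*} [NonAssocSemiring R] [NonAssocSemiring S] (f : R →+* S)
    (A : Matrix n ι R) (b : n → R) (v : κ → ι → R) :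
    (slackMatrix A b v).map f = slackMatrix (A.map f) (f ∘ b) fun k => f ∘ v k := by
  ext i k
  simp only [slackMatrix, map_apply, of_apply, map_add, RingHom.map_mulVec, Function.comp_apply]

theorem slackMatrix_mul [CommSemiring R] [Fintype κ] (A : Matrix n ι R) (b : n → R)
    (v : κ → ι → R) {C : Matrix κ μ R} (hC : ∀ j, ∑ k, C k j = 1) :
    slackMatrix A b v * C = slackMatrix A b fun j => ∑ k, C k j • v k := by
  ext i j
  simp only [slackMatrix, mul_apply, of_apply, mulVec_sum, mulVec_smul, Finset.sum_apply,
    Pi.smul_apply, smul_eq_mul, add_mul, Finset.sum_add_distrib, ← Finset.mul_sum, hC, mul_one]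
  simp only [mul_comm]

theorem rank_slackMatrix_le_of_affineSpan_le [CommRing R] [StrongRankCondition R] [Fintype κ]
    [Fintype μ] (A : Matrix n ι R) (b : n → R) {u : μ → ι → R} {v : κ → ι → R}
    (huv : affineSpan R (range u) ≤ affineSpan R (range v)) :
    (slackMatrix A b u).rank ≤ (slackMatrix A b v).rank := by
  have hu (j : μ) : ∃ c : κ → R, ∑ k, c k = 1 ∧ u j = ∑ k, c k • v k := by
    obtain ⟨c, hc, hcu⟩ := eq_affineCombination_of_mem_affineSpan_of_fintype
      (huv (mem_affineSpan R (mem_range_self j)))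
    exact ⟨c, hc, hcu.trans (Finset.affineCombination_eq_linear_combination _ _ _ hc)⟩
  choose c hc hcu using hu
  have hmul : slackMatrix A b u = slackMatrix A b v * of fun k j => c j k := by
    rw [funext hcu]
    exact (slackMatrix_mul A b v hc).symm
  exact hmul ▸ rank_mul_le_left _ _

end SlackMatrix

theorem stmt2_general {K L : Type*} [Field K] [Field L] [LinearOrder L] [IsStrictOrderedRing L]
    [Algebra K L] {n ι κ μ : Type*} [Fintype ι] [Fintype κ] [Fintype μ]
    (A : Matrix n ι K) (b : n → K) (s : μ → ι → K) (q : κ → ι → L)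
    (hspan : affineSpan L (range q) ≤ affineSpan L (range fun j => algebraMap K L ∘ s j))
    (hsq : convexHull L (range fun j => algebraMap K L ∘ s j) ⊆ convexHull L (range q))
    (hqP : convexHull L (range q) ⊆
      {x | 0 ≤ A.map (algebraMap K L) *ᵥ x + algebraMap K L ∘ b}) :
    let M := (slackMatrix A b s).map (algebraMap K L)
    let W := slackMatrix (A.map (algebraMap K L)) (algebraMap K L ∘ b) q
    (∀ i k, 0 ≤ W i k) ∧
    ∃ H : Matrix κ μ L,
      (∀ k j, 0 ≤ H k j) ∧ (∀ j, ∑ k, H k j = 1) ∧ M = W * H ∧ W.rank = M.rank ∧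
      ((∀ k x, ∃ c : K, q k x = algebraMap K L c) →
        (∀ i k, ∃ c : K, W i k = algebraMap K L c) ∧
        (∀ k j, ∃ c : K, H k j = algebraMap K L c)) := by
  intro M W
  have hM : M = slackMatrix (A.map (algebraMap K L)) (algebraMap K L ∘ b)
      fun j => algebraMap K L ∘ s j := slackMatrix_map _ A b s
  choose h h_mem h_comb h_indep using fun j => exists_mem_stdSimplex_affineIndependent_support
    (hsq (subset_convexHull L _ (mem_range_self j)))
  have hMW : M = W * of fun k j => h j k := by
    rw [hM, ← funext h_comb]
    exact (slackMatrix_mul _ _ q fun j => (h_mem j).2).symm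
  refine ⟨fun i k => hqP (subset_convexHull L _ (mem_range_self k)) i, of fun k j => h j k,
    fun k j => (h_mem j).1 k, fun j => (h_mem j).2, hMW, ?_, fun hq => ?_⟩
  · exact (hM ▸ rank_slackMatrix_le_of_affineSpan_le _ _ hspan).antisymm
      (hMW ▸ rank_mul_le_left _ _)
  · choose v hv using hq
    obtain rfl : q = fun k => algebraMap K L ∘ v k := funext fun k => funext (hv k)
    refine ⟨fun i k => ⟨slackMatrix A b v i k, ?_⟩, fun k j => ?_⟩
    · exact (congrFun₂ (slackMatrix_map (algebraMap K L) A b v) i k).symm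
    · obtain ⟨c, hc⟩ := weights_mem_range_algebraMap_of_affineIndependent_support
        (h_indep j) (h_mem j).2 (h_comb j) k
      exact ⟨c, hc.symm⟩

/-- Reduction from the nested polytope problem to restricted NMF: points spanning a
nested polytope determine a restricted NMF, preserving rationality.

Here `ℓ` plays the role of `r - 1`, so that the augmented matrix `(A b)` has `ℓ + 1 = r`
columns and full column rank `r`. -/
theorem stmt2 {ℓ n m d : ℕ}
    (A : Matrix (Fin n) (Fin ℓ) ℚ) (b : Fin n → ℚ)
    -- the outer polytope `P = {x ∈ ℝ^ℓ | A x + b ≥ 0}`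
    (P : Set (Fin ℓ → ℝ))
    (hP : P = {x : Fin ℓ → ℝ | ∀ i, 0 ≤ (A.map ((↑) : ℚ → ℝ)).mulVec x i + (b i : ℝ)})
    -- `P` is bounded (hence a polytope)
    (hPbdd : Bornology.IsBounded P)
    -- the augmented matrix `(A b)` has rank `ℓ + 1`, i.e. `P` is full-dimensional
    (hrank : (Matrix.of fun i : Fin n => Fin.snoc (fun j => A i j) (b i) :
        Matrix (Fin n) (Fin (ℓ + 1)) ℚ).rank = ℓ + 1)
    -- rational points `s_1, …, s_m` of `P`
    (s : Fin m → Fin ℓ → ℚ)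
    (hsP : ∀ j, (fun x => ((s j x : ℝ))) ∈ P)
    -- their convex hull `S` is full-dimensional
    (S : Set (Fin ℓ → ℝ))
    (hS : S = convexHull ℝ (Set.range fun j : Fin m => fun x => ((s j x : ℝ))))
    (hSfull : (interior S).Nonempty)
    -- the matrix `M` with columns `M^j = A s_j + b`
    (M : Matrix (Fin n) (Fin m) ℚ)
    (hM : ∀ j i, M i j = A.mulVec (s j) i + b i)
    -- points `q_1, …, q_d` spanning a nested polytope
    (q : Fin d → Fin ℓ → ℝ)
    (hq1 : S ⊆ convexHull ℝ (Set.range q))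
    (hq2 : convexHull ℝ (Set.range q) ⊆ P)
    -- the matrix `W` with columns `W^i = A q_i + b`
    (W : Matrix (Fin n) (Fin d) ℝ)
    (hW : ∀ i k, W i k = (A.map ((↑) : ℚ → ℝ)).mulVec (q k) i + (b i : ℝ)) :
    (∀ i k, 0 ≤ W i k) ∧
    ∃ H : Matrix (Fin d) (Fin m) ℝ,
      (∀ k j, 0 ≤ H k j) ∧ (∀ j, ∑ k, H k j = 1) ∧
      M.map ((↑) : ℚ → ℝ) = W * H ∧
      W.rank = (M.map ((↑) : ℚ → ℝ)).rank ∧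
      ((∀ k x, ∃ c : ℚ, q k x = (c : ℝ)) →
        (∀ i k, ∃ c : ℚ, W i k = (c : ℝ)) ∧ (∀ k j, ∃ c : ℚ, H k j = (c : ℝ))) := by
  obtain rfl : M = slackMatrix A b s := Matrix.ext fun i j => hM j i
  obtain rfl : W = slackMatrix (A.map ((↑) : ℚ → ℝ)) ((↑) ∘ b) q := Matrix.ext hW
  subst hP hS
  have hspan := interior_convexHull_nonempty_iff_affineSpan_eq_top.1 hSfull
  exact stmt2_general A b s q (le_top.trans hspan.ge) hq1 hq2
end

section
/- Let r, n, m, d ∈ ℕ, A ∈ ℚ^{n×(r−1)}, b ∈ ℚ^n be such that P = {x ∈ ℝ^{r−1} : Ax + b ≥ 0} is bounded and the augmented matrix (A b) ∈ ℚ^{n×r} has rank r. Let s_1, …, s_m ∈ ℚ^{r−1} be points of P whose convex hull S is full-dimensional (i.e., has nonempty interior in ℝ^{r−1}), and define M ∈ ℚ^{n×m} by M^j = A s_j + b for each j. Suppose M = W·H where W ∈ ℝ_+^{n×d} has no zero column, H ∈ ℝ_+^{d×m}, and rank(W) = rank(M). Then there exist points q_1, …, q_d ∈ ℝ^{r−1}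 with S ⊆ conv{q_1, …, q_d} ⊆ P; moreover, if W and H are rational, the q_i can be taken rational. -/
/-!
In homogeneous coordinates the factorization reads `B * X = W * H`, where `B = (A b)` and the
columns of `X` are the `(s_j, 1)`. The rank condition puts the columns of `W` in the column space
of `B * X`, so `W = B * Y` for some `Y`, and `X = Y * H` because `B` has independent columns. Write
`(u_k, t_k)` for the columns of `Y`. As the polyhedron is bounded and `W` is nonnegative without
zero column, `t_k > 0`; so `q_k = u_k / t_k` lies in the polyhedron, and `X = Y * H` expresses `s_j`
as the convex combination of the `q_k` with weights `H k j * t_k`. Finally `Y` is the only solution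
of `B * Y = W`, hence has entries in any field containing those of `A`, `b` and `W`.
-/

open Matrix Set

section LinearAlgebra

variable {m n p q K L : Type*} [Field K]

theorem linearIndependent_col_iff_rank_eq_card [Fintype n] {A : Matrix m n K} :
    LinearIndependent K A.col ↔ A.rank = Fintype.card n := by
  rw [linearIndependent_iff_card_eq_finrank_span, rank_eq_finrank_span_cols, Set.finrank, eq_comm]

theorem exists_mul_mul_eq_of_rank_le [Finite m] [Fintype n] [Fintype p] (W : Matrix m n K)
    (H : Matrix n p K) (h : W.rank ≤ (W * H).rank) : ∃ C : Matrix p n K, W * H * C = W := by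
  classical
  have h_range : LinearMap.range (W * H).mulVecLin = LinearMap.range W.mulVecLin := by
    refine Submodule.eq_of_le_of_finrank_le ?_ h
    rw [mulVecLin_mul]
    exact LinearMap.range_comp_le_range _ _
  have h_col (k : n) : ∃ c, (W * H) *ᵥ c = W.col k := by
    have : W.col k ∈ LinearMap.range (W * H).mulVecLin :=
      h_range ▸ ⟨Pi.single k 1, by simp⟩
    exact this
  choose c hc using h_col
  exact ⟨(of c)ᵀ, ext_col hc⟩

theorem nonempty_of_rank_le_rank_mul [Finite m] [Fintype n] [Fintype p] {W : Matrix m n K}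
    {H : Matrix n p K} (hW : W ≠ 0) (h : W.rank ≤ (W * H).rank) : Nonempty p := by
  obtain ⟨C, hC⟩ := exists_mul_mul_eq_of_rank_le W H h
  by_contra! hp
  exact hW (hC ▸ by ext; simp [mul_apply])

theorem exists_mul_eq_of_mul_eq_mul [Finite m] [Fintype n] [Fintype p] [Fintype q]
    {B : Matrix m p K} (hB : LinearIndependent K B.col) {S : Matrix p q K} {W : Matrix m n K}
    {H : Matrix n q K} (hfac : B * S = W * H) (hrank : W.rank ≤ (W * H).rank) :
    ∃ Y : Matrix p n K, B * Y = W ∧ Y * H = S := by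
  obtain ⟨C, hC⟩ := exists_mul_mul_eq_of_rank_le W H hrank
  have hY : B * (S * C) = W := by rw [← Matrix.mul_assoc, hfac, hC]
  refine ⟨S * C, hY, ext_col fun j ↦ mulVec_injective_iff.2 hB ?_⟩
  change (B * (S * C * H)).col j = (B * S).col j
  rw [← Matrix.mul_assoc, hY, hfac]

theorem mem_subfield_of_mulVec_mem [Field L] [Fintype n] (F : Subfield L) {B : Matrix m n L}
    (hB : LinearIndependent L B.col) (hBF : ∀ i j, B i j ∈ F) {y : n → L}
    (hy : ∀ i, (B *ᵥ y) i ∈ F) (j : n) : y j ∈ F := by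
  -- An `F`-linear retraction `π` of `L` onto `F`, applied coordinatewise, commutes with `B`, so
  -- `π y` and `y` have the same image under `B`.
  obtain ⟨π, hπ⟩ := (Algebra.linearMap F L).exists_leftInverse_of_injective
    (LinearMap.ker_eq_bot.2 (algebraMap F L).injective)
  have hπF (a : L) (ha : a ∈ F) : (π a : L) = a :=
    congrArg Subtype.val (LinearMap.congr_fun hπ ⟨a, ha⟩)
  have hπmul (a x : L) (ha : a ∈ F) : (π (a * x) : L) = a * π x :=
    congrArg Subtype.val (π.map_smul ⟨a, ha⟩ x)
  have h_eq : B *ᵥ (fun j ↦ (π (y j) : L)) = B *ᵥ y := by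
    ext i
    calc (B *ᵥ fun j ↦ (π (y j) : L)) i = ∑ j, (π (B i j * y j) : L) :=
          Finset.sum_congr rfl fun j _ ↦ (hπmul _ _ (hBF i j)).symm
      _ = π ((B *ᵥ y) i) := by simp [mulVec, dotProduct]
      _ = (B *ᵥ y) i := hπF _ (hy i)
  rw [← congrFun (mulVec_injective_iff.2 hB h_eq) j]
  exact (π (y j)).2

end LinearAlgebra

section Polyhedron

variable {n R : Type*} {ℓ : ℕ}

/-- The augmented matrix `(A b)`, with `b` as its last column: the map `x ↦ A x + b` in homogeneous
coordinates. -/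
def augment (A : Matrix n (Fin ℓ) R) (b : n → R) : Matrix n (Fin (ℓ + 1)) R :=
  of fun i ↦ Fin.snoc (fun j ↦ A i j) (b i)

theorem augment_map {S : Type*} (f : R → S) (A : Matrix n (Fin ℓ) R) (b : n → R) :
    (augment A b).map f = augment (A.map f) (f ∘ b) :=
  Matrix.ext fun _ j ↦ Fin.lastCases (by simp [augment]) (by simp [augment]) j

theorem linearIndependent_col_augment_map [Finite n] {K L : Type*} [Field K] [Field L] [Algebra K L]
    {A : Matrix n (Fin ℓ) K} {b : n → K} (hrank : (augment A b).rank = ℓ + 1) :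
    LinearIndependent L (augment (A.map (algebraMap K L)) (algebraMap K L ∘ b)).col := by
  rw [← augment_map]
  exact linearIndependent_algebraMap_comp_iff.2
    (linearIndependent_col_iff_rank_eq_card.2 (hrank.trans (Fintype.card_fin _).symm))

theorem augment_mem {F : Set R} {A : Matrix n (Fin ℓ) R} {b : n → R} (hA : ∀ i j, A i j ∈ F)
    (hb : ∀ i, b i ∈ F) (i : n) (j : Fin (ℓ + 1)) : augment A b i j ∈ F :=
  Fin.lastCases (by simpa [augment] using hb i) (by simpa [augment] using hA i) j

theorem augment_mulVec [CommSemiring R] (A : Matrix n (Fin ℓ) R) (b : n → R)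
    (y : Fin (ℓ + 1) → R) :
    augment A b *ᵥ y = A *ᵥ Fin.init y + y (Fin.last ℓ) • b := by
  ext i
  simp [augment, mulVec, dotProduct, Fin.sum_univ_castSucc, Fin.init, mul_comm (b i)]

/-- The homogeneous coordinates `(x, 1)` of a point `x`, on which `augment A b` acts as
`x ↦ A x + b`. -/
def homogenize [One R] (x : Fin ℓ → R) : Fin (ℓ + 1) → R :=
  Fin.snoc (α := fun _ ↦ R) x 1

theorem augment_mulVec_homogenize [CommSemiring R] (A : Matrix n (Fin ℓ) R) (b : n → R)
    (x : Fin ℓ → R) : augment A b *ᵥ homogenize x = A *ᵥ x + b := by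
  simp [augment_mulVec, homogenize]

/-- The point `u / t` with homogeneous coordinates `y = (u, t)`; it is the junk value `0` when
`t = 0`. -/
def dehomogenize [DivisionRing R] (y : Fin (ℓ + 1) → R) : Fin ℓ → R :=
  (y (Fin.last ℓ))⁻¹ • Fin.init y

theorem dehomogenize_mem [Field R] {F : Subfield R} {y : Fin (ℓ + 1) → R} (hy : ∀ j, y j ∈ F)
    (x : Fin ℓ) : dehomogenize y x ∈ F :=
  F.mul_mem (F.inv_mem (hy _)) (hy _)

/-- The polyhedron `{x | A x + b ≥ 0}`, the outer body of the nested polytope problem. -/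
def polyhedron [CommSemiring R] [LE R] (A : Matrix n (Fin ℓ) R) (b : n → R) :
    Set (Fin ℓ → R) :=
  {x | ∀ i, 0 ≤ (A *ᵥ x) i + b i}

theorem convex_polyhedron [CommRing R] [PartialOrder R] [IsOrderedRing R] (A : Matrix n (Fin ℓ) R)
    (b : n → R) : Convex R (polyhedron A b) := by
  have h_preimage : polyhedron A b = A.mulVecLin ⁻¹' Ici (-b) := by
    ext x
    simp [polyhedron, Pi.le_def, neg_le_iff_add_nonneg]
  rw [h_preimage]
  exact (convex_Ici _).linear_preimage _

variable [Field R] [LinearOrder R] [IsStrictOrderedRing R]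

theorem dehomogenize_mem_polyhedron {A : Matrix n (Fin ℓ) R} {b : n → R} {y : Fin (ℓ + 1) → R}
    (hy : 0 ≤ augment A b *ᵥ y) (hpos : 0 < y (Fin.last ℓ)) :
    dehomogenize y ∈ polyhedron A b := by
  have h_scale : A *ᵥ dehomogenize y + b = (y (Fin.last ℓ))⁻¹ • (augment A b *ᵥ y) := by
    rw [augment_mulVec, smul_add, inv_smul_smul₀ hpos.ne', dehomogenize, mulVec_smul]
  intro i
  rw [← Pi.add_apply, h_scale]
  exact mul_nonneg (inv_nonneg.2 hpos.le) (hy i)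

theorem mem_convexHull_range_dehomogenize {κ : Type*} [Fintype κ] {x : Fin ℓ → R}
    {y : κ → Fin (ℓ + 1) → R} {h : κ → R} (hpos : ∀ k, 0 < y k (Fin.last ℓ)) (hh : 0 ≤ h)
    (hx : homogenize x = ∑ k, h k • y k) :
    x ∈ convexHull R (range fun k ↦ dehomogenize (y k)) := by
  have h_sum : ∑ k, h k * y k (Fin.last ℓ) = 1 := by
    simpa [homogenize] using (congrFun hx (Fin.last ℓ)).symm
  have h_comb : x = ∑ k, (h k * y k (Fin.last ℓ)) • dehomogenize (y k) := by
    ext c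
    have hc : x c = ∑ k, h k * y k c.castSucc := by
      simpa [homogenize] using congrFun hx c.castSucc
    simp [hc, dehomogenize, Fin.init, mul_assoc, (hpos _).ne']
  rw [h_comb]
  exact (convex_convexHull R _).sum_mem (fun k _ ↦ mul_nonneg (hh k) (hpos k).le) h_sum
    fun k _ ↦ subset_convexHull R _ ⟨k, rfl⟩

end Polyhedron

section Bounded

open Bornology

theorem eq_zero_of_isBounded_of_smul_add_mem {E : Type*} [NormedAddCommGroup E]
    [NormedSpace ℝ E] {s : Set E} (hs : IsBounded s) {x v : E}
    (h : ∀ t : ℝ, 0 ≤ t → t • v + x ∈ s) : v = 0 := by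
  have h_tendsto := (Filter.tendsto_id (α := ℝ) (x := Filter.atTop))
    |>.atTop_smul_const_tendsto_asymptoticNhds v |>.asymptoticNhds_vadd_const x
  have h_mem : ∀ᶠ t : ℝ in Filter.atTop, t • v + x ∈ s :=
    (Filter.eventually_ge_atTop 0).mono h
  exact asymptoticCone_subset_singleton_of_bounded hs (h_tendsto.frequently h_mem.frequently)

variable {n : Type*} {ℓ : ℕ} {A : Matrix n (Fin ℓ) ℝ} {b : n → ℝ}

theorem eq_zero_of_mulVec_nonneg_of_isBounded_polyhedron (hbdd : IsBounded (polyhedron A b))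
    (hne : (polyhedron A b).Nonempty) {v : Fin ℓ → ℝ} (hv : 0 ≤ A *ᵥ v) : v = 0 := by
  obtain ⟨x, hx⟩ := hne
  refine eq_zero_of_isBounded_of_smul_add_mem hbdd (x := x) fun t ht i ↦ ?_
  simpa [mulVec_add, mulVec_smul, add_assoc] using add_nonneg (mul_nonneg ht (hv i)) (hx i)

theorem last_pos_of_augment_mulVec_nonneg (hbdd : IsBounded (polyhedron A b))
    (hne : (polyhedron A b).Nonempty) {y : Fin (ℓ + 1) → ℝ} (hy : 0 ≤ augment A b *ᵥ y)
    (hy0 : augment A b *ᵥ y ≠ 0) : 0 < y (Fin.last ℓ) := by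
  by_contra! ht
  obtain ⟨x, hx⟩ := hne
  set t := y (Fin.last ℓ)
  have hx' : t • (A *ᵥ x + b) ≤ 0 := fun i ↦ mul_nonpos_of_nonpos_of_nonneg ht (hx i)
  -- Since `t ≤ 0`, the vector `y - t (x, 1)` is a recession direction of the polyhedron.
  have h_dir : A *ᵥ (Fin.init y - t • x) = augment A b *ᵥ y - t • (A *ᵥ x + b) := by
    rw [augment_mulVec, mulVec_sub, mulVec_smul, smul_add, add_sub_add_right_eq_sub]
  have h_zero : Fin.init y - t • x = 0 :=
    eq_zero_of_mulVec_nonneg_of_isBounded_polyhedron hbdd ⟨x, hx⟩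
      (h_dir ▸ sub_nonneg.2 (hx'.trans hy))
  rw [h_zero, mulVec_zero, eq_comm, sub_eq_zero] at h_dir
  exact hy0 (le_antisymm (h_dir ▸ hx') hy)

end Bounded

theorem stmt3_general {ℓ : ℕ} {n m d : Type*} [Finite n] [Fintype m] [Fintype d]
    (A : Matrix n (Fin ℓ) ℝ) (b : n → ℝ) (hbdd : Bornology.IsBounded (polyhedron A b))
    (hAb : LinearIndependent ℝ (augment A b).col) (s : m → Fin ℓ → ℝ)
    (W : Matrix n d ℝ) (H : Matrix d m ℝ) (hW : ∀ i k, 0 ≤ W i k) (hH : ∀ k j, 0 ≤ H k j)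
    (hW0 : ∀ k, ∃ i, W i k ≠ 0) (hfac : ∀ j, A *ᵥ s j + b = (W * H).col j)
    (hWH : W.rank ≤ (W * H).rank) :
    ∃ q : d → Fin ℓ → ℝ,
      convexHull ℝ (range s) ⊆ convexHull ℝ (range q) ∧
      convexHull ℝ (range q) ⊆ polyhedron A b ∧
      ∀ F : Subfield ℝ, (∀ i j, A i j ∈ F) → (∀ i, b i ∈ F) → (∀ i k, W i k ∈ F) →
        ∀ k x, q k x ∈ F := by
  obtain ⟨Y, hY, hYH⟩ := exists_mul_eq_of_mul_eq_mul hAb (S := (of fun j ↦ homogenize (s j))ᵀ)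
    (ext_col fun j ↦ (augment_mulVec_homogenize A b (s j)).trans (hfac j)) hWH
  have hY_col (k : d) : augment A b *ᵥ Y.col k = W.col k := congrArg (col · k) hY
  have h_ne (k : d) : (polyhedron A b).Nonempty := by
    obtain ⟨i, hi⟩ := hW0 k
    obtain ⟨j⟩ := nonempty_of_rank_le_rank_mul (fun h ↦ hi (congrFun₂ h i k)) hWH
    have h_nonneg (i : n) : 0 ≤ (W * H).col j i :=
      Finset.sum_nonneg fun k _ ↦ mul_nonneg (hW i k) (hH k j)
    exact ⟨s j, fun i ↦ (h_nonneg i).trans_eq (congrFun (hfac j) i).symm⟩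
  have h_pos (k : d) : 0 < Y.col k (Fin.last ℓ) :=
    last_pos_of_augment_mulVec_nonneg hbdd (h_ne k) (hY_col k ▸ (hW · k))
      (hY_col k ▸ Function.ne_iff.2 (hW0 k))
  refine ⟨fun k ↦ dehomogenize (Y.col k), ?_, ?_, fun F hA hb hWF k ↦ dehomogenize_mem ?_⟩
  · refine convexHull_min (range_subset_iff.2 fun j ↦ ?_) (convex_convexHull ℝ _)
    refine mem_convexHull_range_dehomogenize h_pos (fun k ↦ hH k j) ?_
    ext c
    simpa [mul_apply, mul_comm] using (congrFun₂ hYH c j).symm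
  · refine convexHull_min (range_subset_iff.2 fun k ↦ ?_) (convex_polyhedron A b)
    exact dehomogenize_mem_polyhedron (hY_col k ▸ (hW · k)) (h_pos k)
  · exact mem_subfield_of_mulVec_mem F hAb (augment_mem hA hb) (hY_col k ▸ (hWF · k))

/-- Reduction from restricted NMF to the nested polytope problem: a restricted NMF
(with `W` having no zero column) determines points spanning a nested polytope,
preserving rationality.

Here `ℓ` plays the role of `r - 1`, so that the augmented matrix `(A b)` has `ℓ + 1 = r`
columns and full column rank `r`. -/
theorem stmt3 {ℓ n m d : ℕ}
    (A : Matrix (Fin n) (Fin ℓ) ℚ) (b : Fin n → ℚ)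
    -- the outer polytope `P = {x ∈ ℝ^ℓ | A x + b ≥ 0}`
    (P : Set (Fin ℓ → ℝ))
    (hP : P = {x : Fin ℓ → ℝ | ∀ i, 0 ≤ (A.map ((↑) : ℚ → ℝ)).mulVec x i + (b i : ℝ)})
    -- `P` is bounded (hence a polytope)
    (hPbdd : Bornology.IsBounded P)
    -- the augmented matrix `(A b)` has rank `ℓ + 1`, i.e. `P` is full-dimensional
    (hrank : (Matrix.of fun i : Fin n => Fin.snoc (fun j => A i j) (b i) :
        Matrix (Fin n) (Fin (ℓ + 1)) ℚ).rank = ℓ + 1)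
    -- rational points `s_1, …, s_m` of `P`
    (s : Fin m → Fin ℓ → ℚ)
    (hsP : ∀ j, (fun x => ((s j x : ℝ))) ∈ P)
    -- their convex hull `S` is full-dimensional
    (S : Set (Fin ℓ → ℝ))
    (hS : S = convexHull ℝ (Set.range fun j : Fin m => fun x => ((s j x : ℝ))))
    (hSfull : (interior S).Nonempty)
    -- the matrix `M` with columns `M^j = A s_j + b`
    (M : Matrix (Fin n) (Fin m) ℚ)
    (hM : ∀ j i, M i j = A.mulVec (s j) i + b i)
    -- a restricted NMF `M = W · H` where `W` has no zero column
    (W : Matrix (Fin n) (Fin d) ℝ) (H : Matrix (Fin d) (Fin m) ℝ)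
    (hWnn : ∀ i k, 0 ≤ W i k) (hHnn : ∀ k j, 0 ≤ H k j)
    (hWnz : ∀ k, ∃ i, W i k ≠ 0)
    (hfac : M.map ((↑) : ℚ → ℝ) = W * H)
    (hrkW : W.rank = (M.map ((↑) : ℚ → ℝ)).rank) :
    ∃ q : Fin d → Fin ℓ → ℝ,
      S ⊆ convexHull ℝ (Set.range q) ∧ convexHull ℝ (Set.range q) ⊆ P ∧
      (((∀ i k, ∃ c : ℚ, W i k = (c : ℝ)) ∧ (∀ k j, ∃ c : ℚ, H k j = (c : ℝ))) →
        ∀ k x, ∃ c : ℚ, q k x = (c : ℝ)) := by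
  subst hP hS
  obtain ⟨q, hSq, hqP, hq⟩ := stmt3_general (A.map (↑)) (fun i ↦ (b i : ℝ)) hPbdd
    (linearIndependent_col_augment_map hrank)
    (fun j x ↦ (s j x : ℝ)) W H hWnn hHnn hWnz
    (fun j ↦ hfac ▸ funext fun i ↦ by simp [hM, mulVec, dotProduct]) (hfac ▸ hrkW.le)
  refine ⟨q, hSq, hqP, fun ⟨hWq, _⟩ k x ↦ ?_⟩
  obtain ⟨c, hc⟩ := hq (Rat.castHom ℝ).fieldRange (fun i j ↦ ⟨A i j, rfl⟩) (fun i ↦ ⟨b i, rfl⟩)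
    (fun i k ↦ (hWq i k).imp fun _ ↦ Eq.symm) k x
  exact ⟨c, hc.symm⟩
end

section
/- Let M ∈ ℚ_+^{n×m} be column-stochastic and let ℳ be the LMC constructed from M. Then rk(ℳ) = rank(M) + 2. -/
open Matrix

/-- Transition matrix of a labelled Markov chain extended to words:
`μ(σ₁…σ_k) = μ(σ₁) ⋯ μ(σ_k)`, with `μ(ε) = I`. -/
noncomputable def lmcWord {A S : Type} [Fintype S] [DecidableEq S]
    (μ : A → Matrix S S ℝ) (w : List A) : Matrix S S ℝ :=
  (w.map μ).prod

/-- Entry of the backward matrix: `(B_ℳ)_{i,w} = e_i^⊤ μ(w) 𝟙`. -/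
noncomputable def lmcB {A S : Type} [Fintype S] [DecidableEq S]
    (μ : A → Matrix S S ℝ) (i : S) (w : List A) : ℝ :=
  ∑ j, lmcWord μ w i j

/-- The rank of an LMC: the dimension of the span of the columns of its backward matrix. -/
noncomputable def lmcRank {A S : Type} [Fintype S] [DecidableEq S]
    (μ : A → Matrix S S ℝ) : ℕ :=
  Module.finrank ℝ
    (Submodule.span ℝ (Set.range fun w : List A => fun i : S => lmcB μ i w))

/-- The LMC constructed from a column-stochastic matrix `M ∈ ℝ_+^{n×m}`.
States: `Sum.inl ()` is state `0`, `Sum.inr (Sum.inl i)` is state `i ∈ [m]`,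
and `Sum.inr (Sum.inr ())` is state `m+1`.
Alphabet: `Sum.inl i` is `a_i`, `Sum.inr (Sum.inl j)` is `b_j`, `Sum.inr (Sum.inr ())` is `✓`.
Transitions: `μ(a_i)_{0,i} = 1/m`, `μ(b_j)_{i,m+1} = M_{j,i}`, `μ(✓)_{m+1,m+1} = 1`,
all other entries `0`. -/
noncomputable def lmcMu {n m : ℕ} (M : Matrix (Fin n) (Fin m) ℝ) :
    (Fin m ⊕ Fin n ⊕ Unit) →
      Matrix (Unit ⊕ Fin m ⊕ Unit) (Unit ⊕ Fin m ⊕ Unit) ℝ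
  | Sum.inl i => Matrix.of fun p q =>
      match p, q with
      | Sum.inl _, Sum.inr (Sum.inl i') => if i' = i then 1 / (m : ℝ) else 0
      | _, _ => 0
  | Sum.inr (Sum.inl j) => Matrix.of fun p q =>
      match p, q with
      | Sum.inr (Sum.inl i), Sum.inr (Sum.inr _) => M j i
      | _, _ => 0
  | Sum.inr (Sum.inr _) => Matrix.of fun p q =>
      match p, q with
      | Sum.inr (Sum.inr _), Sum.inr (Sum.inr _) => 1
      | _, _ => 0

/-! The column of a word starting with `a_i`, `b_j` or `✓` is, respectively, a multiple of the unit
vector at state `0`, of row `j` of `M` placed on the states `[m]`, or of the unit vector at `m + 1`.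
The column of the empty word is `𝟙`, whose restriction to `[m]` is the sum of the rows of `M`.
Conversely, the words `b_j` and `✓` yield the rows of `M` and the unit vector at `m + 1`, and
subtracting from `𝟙` its parts on `[m]` and at `m + 1` leaves the unit vector at `0`.  Hence the
columns span exactly the vectors whose restriction to `[m]` lies in the row space of `M`, and the
two states outside `[m]` account for the summand `2`. -/

section LinearAlgebra

variable {K V W : Type*} [Field K] [AddCommGroup V] [Module K V] [AddCommGroup W] [Module K W]

theorem finrank_comap_add_finrank_of_surjective [FiniteDimensional K V] {f : V →ₗ[K] W}
    (hf : Function.Surjective f) (p : Submodule K W) :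
    Module.finrank K (p.comap f) + Module.finrank K W =
      Module.finrank K p + Module.finrank K V := by
  have restricted := (f.submoduleComap p).finrank_range_add_finrank_ker
  have total := f.finrank_range_add_finrank_ker
  have ker_eq : (f.submoduleComap p).ker = f.ker.comap (p.comap f).subtype := by
    ext v
    simp [Subtype.ext_iff]
  have finrank_ker_eq : Module.finrank K (f.submoduleComap p).ker = Module.finrank K f.ker := by
    rw [ker_eq]
    exact (Submodule.comapSubtypeEquivOfLe f.ker_le_comap).finrank_eq
  rw [LinearMap.range_eq_top.2 (f.submoduleComap_surjective_of_surjective p hf), finrank_top,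
    finrank_ker_eq] at restricted
  rw [LinearMap.range_eq_top.2 hf, finrank_top] at total
  omega

theorem one_mem_span_range_row_of_sum_eq_one {ι κ R : Type*} [Fintype ι] [Semiring R]
    {M : Matrix ι κ R} (hM : ∀ i, ∑ j, M j i = 1) :
    (1 : κ → R) ∈ Submodule.span R (Set.range M.row) := by
  have sum_rows : ∑ j, M.row j = 1 := funext fun i => by simpa using hM i
  rw [← sum_rows]
  exact Submodule.sum_mem _ fun j _ => Submodule.subset_span ⟨j, rfl⟩

end LinearAlgebra

section BackwardSpace

variable {A S : Type} [Fintype S] [DecidableEq S]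

/-- The backward space of an LMC: the column space of its backward matrix, whose dimension is the
rank of the LMC. -/
def lmcBackwardSpace (μ : A → Matrix S S ℝ) : Submodule ℝ (S → ℝ) :=
  Submodule.span ℝ (Set.range fun w : List A => fun i : S => lmcB μ i w)

theorem lmcB_nil (μ : A → Matrix S S ℝ) : (fun i => lmcB μ i []) = 1 := by
  ext i
  simp [lmcB, lmcWord, Matrix.one_apply]

theorem lmcB_cons (μ : A → Matrix S S ℝ) (a : A) (w : List A) :
    (fun i => lmcB μ i (a :: w)) = μ a *ᵥ fun i => lmcB μ i w := by
  ext i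
  simp only [lmcB, lmcWord, List.map_cons, List.prod_cons, Matrix.mul_apply, Matrix.mulVec,
    dotProduct, Finset.mul_sum]
  exact Finset.sum_comm

theorem one_mem_lmcBackwardSpace (μ : A → Matrix S S ℝ) : 1 ∈ lmcBackwardSpace μ :=
  Submodule.subset_span ⟨[], lmcB_nil μ⟩

theorem mulVec_mem_lmcBackwardSpace (μ : A → Matrix S S ℝ) (a : A) {v : S → ℝ}
    (hv : v ∈ lmcBackwardSpace μ) : μ a *ᵥ v ∈ lmcBackwardSpace μ := by
  suffices lmcBackwardSpace μ ≤ (lmcBackwardSpace μ).comap (μ a).mulVecLin from this hv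
  refine Submodule.span_le.2 ?_
  rintro _ ⟨w, rfl⟩
  exact Submodule.subset_span ⟨a :: w, lmcB_cons μ a w⟩

theorem lmcBackwardSpace_le {μ : A → Matrix S S ℝ} {V : Submodule ℝ (S → ℝ)} (one_mem : 1 ∈ V)
    (mulVec_mem : ∀ a, ∀ v ∈ V, μ a *ᵥ v ∈ V) : lmcBackwardSpace μ ≤ V := by
  refine Submodule.span_le.2 ?_
  rintro _ ⟨w, rfl⟩
  induction w with
  | nil => simpa only [lmcB_nil, SetLike.mem_coe] using one_mem
  | cons a w ih => simpa only [lmcB_cons, SetLike.mem_coe] using mulVec_mem a _ ih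

end BackwardSpace

namespace lmcMu

variable {n m : ℕ} (M : Matrix (Fin n) (Fin m) ℝ)

/-- The embedding of `[m]` into the states `{0, …, m + 1}` of the LMC constructed from a matrix
with `m` columns. -/
def middle (i : Fin m) : Unit ⊕ Fin m ⊕ Unit := Sum.inr (Sum.inl i)

theorem middle_injective : Function.Injective (middle (m := m)) :=
  Sum.inr_injective.comp Sum.inl_injective

theorem extend_middle (r : Fin m → ℝ) :
    Function.extend middle r 0 = Sum.elim (0 : Unit → ℝ) (Sum.elim r (0 : Unit → ℝ)) := by
  ext (_ | i | _)
  · exact Function.extend_apply' _ _ _ (by simp [middle])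
  · exact middle_injective.extend_apply r 0 i
  · exact Function.extend_apply' _ _ _ (by simp [middle])

theorem mulVec_letter_a (i : Fin m) (v : Unit ⊕ Fin m ⊕ Unit → ℝ) :
    lmcMu M (Sum.inl i) *ᵥ v = Pi.single (Sum.inl ()) (v (middle i) / m) := by
  ext (_ | _ | _) <;> simp [Matrix.mulVec, dotProduct, lmcMu, middle, div_eq_inv_mul]

theorem mulVec_letter_b (j : Fin n) (v : Unit ⊕ Fin m ⊕ Unit → ℝ) :
    lmcMu M (Sum.inr (Sum.inl j)) *ᵥ v =
      v (Sum.inr (Sum.inr ())) • Function.extend middle (M.row j) 0 := by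
  ext (_ | _ | _) <;> simp [Matrix.mulVec, dotProduct, lmcMu, extend_middle, mul_comm]

theorem mulVec_letter_check (v : Unit ⊕ Fin m ⊕ Unit → ℝ) :
    lmcMu M (Sum.inr (Sum.inr ())) *ᵥ v =
      Pi.single (Sum.inr (Sum.inr ())) (v (Sum.inr (Sum.inr ()))) := by
  ext (_ | _ | _) <;> simp [Matrix.mulVec, dotProduct, lmcMu]

/-- The vectors on the states whose restriction to `[m]` lies in the row space of `M`; this is the
explicit description of the backward space of the LMC constructed from `M`. -/
def rowExtensions : Submodule ℝ (Unit ⊕ Fin m ⊕ Unit → ℝ) :=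
  (Submodule.span ℝ (Set.range M.row)).comap (LinearMap.funLeft ℝ ℝ middle)

variable {M}

theorem mem_rowExtensions {v : Unit ⊕ Fin m ⊕ Unit → ℝ} :
    v ∈ rowExtensions M ↔ v ∘ middle ∈ Submodule.span ℝ (Set.range M.row) :=
  Iff.rfl

theorem backwardSpace_le_rowExtensions (hM : 1 ∈ Submodule.span ℝ (Set.range M.row)) :
    lmcBackwardSpace (lmcMu M) ≤ rowExtensions M := by
  refine lmcBackwardSpace_le hM fun a v _ => mem_rowExtensions.2 ?_
  rcases a with i | j | _
  · have vanishes : Pi.single (Sum.inl ()) (v (middle i) / m) ∘ middle = (0 : Fin m → ℝ) :=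
      funext fun _ => by simp [middle]
    rw [mulVec_letter_a, vanishes]
    exact Submodule.zero_mem _
  · rw [mulVec_letter_b, Pi.smul_comp, Function.extend_comp middle_injective]
    exact Submodule.smul_mem _ _ (Submodule.subset_span ⟨j, rfl⟩)
  · have vanishes : Pi.single (Sum.inr (Sum.inr ())) (v (Sum.inr (Sum.inr ()))) ∘ middle =
        (0 : Fin m → ℝ) :=
      funext fun _ => by simp [middle]
    rw [mulVec_letter_check, vanishes]
    exact Submodule.zero_mem _

variable (M) in
theorem single_final_mem_backwardSpace (c : ℝ) :
    Pi.single (Sum.inr (Sum.inr ())) c ∈ lmcBackwardSpace (lmcMu M) := by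
  have single_one := mulVec_mem_lmcBackwardSpace (lmcMu M) (Sum.inr (Sum.inr ()))
    (one_mem_lmcBackwardSpace _)
  rw [mulVec_letter_check] at single_one
  simpa [← Pi.single_smul] using Submodule.smul_mem _ c single_one

theorem extend_middle_mem_backwardSpace {r : Fin m → ℝ}
    (hr : r ∈ Submodule.span ℝ (Set.range M.row)) :
    Function.extend middle r 0 ∈ lmcBackwardSpace (lmcMu M) := by
  suffices Submodule.span ℝ (Set.range M.row) ≤
      (lmcBackwardSpace (lmcMu M)).comap (Function.ExtendByZero.linearMap ℝ middle) from this hr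
  refine Submodule.span_le.2 ?_
  rintro _ ⟨j, rfl⟩
  have row_mem := mulVec_mem_lmcBackwardSpace (lmcMu M) (Sum.inr (Sum.inl j))
    (one_mem_lmcBackwardSpace _)
  rw [mulVec_letter_b, Pi.one_apply, one_smul] at row_mem
  exact row_mem

theorem single_initial_mem_backwardSpace (hM : 1 ∈ Submodule.span ℝ (Set.range M.row)) (c : ℝ) :
    Pi.single (Sum.inl ()) c ∈ lmcBackwardSpace (lmcMu M) := by
  have decomposition : (Pi.single (Sum.inl ()) c : Unit ⊕ Fin m ⊕ Unit → ℝ) =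
      c • (1 - Function.extend middle 1 0 - Pi.single (Sum.inr (Sum.inr ())) 1) := by
    ext (_ | _ | _) <;> simp [extend_middle]
  rw [decomposition]
  exact Submodule.smul_mem _ c <| Submodule.sub_mem _
    (Submodule.sub_mem _ (one_mem_lmcBackwardSpace _) (extend_middle_mem_backwardSpace hM))
    (single_final_mem_backwardSpace M 1)

theorem backwardSpace_eq_rowExtensions (hM : 1 ∈ Submodule.span ℝ (Set.range M.row)) :
    lmcBackwardSpace (lmcMu M) = rowExtensions M := by
  refine (backwardSpace_le_rowExtensions hM).antisymm fun v hv => ?_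
  have decomposition : v = Pi.single (Sum.inl ()) (v (Sum.inl ())) +
      Function.extend middle (v ∘ middle) 0 +
      Pi.single (Sum.inr (Sum.inr ())) (v (Sum.inr (Sum.inr ()))) := by
    ext (_ | _ | _) <;> simp [extend_middle, middle]
  rw [decomposition]
  exact Submodule.add_mem _ (Submodule.add_mem _ (single_initial_mem_backwardSpace hM _)
    (extend_middle_mem_backwardSpace hv)) (single_final_mem_backwardSpace M _)

variable (M) in
theorem finrank_rowExtensions : Module.finrank ℝ (rowExtensions M) = M.rank + 2 := by
  have dimension : Module.finrank ℝ (rowExtensions M) + Module.finrank ℝ (Fin m → ℝ) =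
      Module.finrank ℝ (Submodule.span ℝ (Set.range M.row)) +
        Module.finrank ℝ (Unit ⊕ Fin m ⊕ Unit → ℝ) :=
    finrank_comap_add_finrank_of_surjective
      (LinearMap.funLeft_surjective_of_injective ℝ ℝ middle middle_injective) _
  rw [← M.rank_eq_finrank_span_row] at dimension
  simp only [Module.finrank_fintype_fun_eq_card, Fintype.card_sum, Fintype.card_unit,
    Fintype.card_fin] at dimension
  omega

end lmcMu

theorem stmt5_general {n m : ℕ} (M : Matrix (Fin n) (Fin m) ℝ)
    (hM : 1 ∈ Submodule.span ℝ (Set.range M.row)) : lmcRank (lmcMu M) = M.rank + 2 := by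
  change Module.finrank ℝ (lmcBackwardSpace (lmcMu M)) = M.rank + 2
  rw [lmcMu.backwardSpace_eq_rowExtensions hM, lmcMu.finrank_rowExtensions]

/-- For a column-stochastic rational matrix `M ∈ ℚ_+^{n×m}`, the LMC `ℳ` constructed
from `M` satisfies `rk(ℳ) = rank(M) + 2`. -/
theorem stmt5 {n m : ℕ} (hm : 0 < m) (M : Matrix (Fin n) (Fin m) ℚ)
    (hMnn : ∀ j i, 0 ≤ M j i) (hMcs : ∀ i : Fin m, ∑ j, M j i = 1) :
    lmcRank (lmcMu (M.map ((↑) : ℚ → ℝ))) = (M.map ((↑) : ℚ → ℝ)).rank + 2 := by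
  refine stmt5_general _ (one_mem_span_range_row_of_sum_eq_one fun i => ?_)
  simpa using congrArg ((↑) : ℚ → ℝ) (hMcs i)
end

section
/- Let M ∈ ℚ_+^{n×m} be column-stochastic and M = W·H where W ∈ ℝ_+^{n×d} and H ∈ ℝ_+^{d×m} are column-stochastic. Let ℳ be the LMC constructed from M and let ℳ' = (d+2, Σ, μ') be the LMC with states {0,1,…,d,d+1}, μ'(a_i)_{0,l} = H_{l,i}/m, μ'(b_j)_{l,d+1} = W_{j,l}, μ'(✓)_{d+1,d+1} = 1 (all other entries zero), for i ∈ [m], j ∈ [n], l ∈ [d]. Then rk(ℳ') = rank(W) + 2, and the row-stochastic matrix A ∈ ℝ_+^{(m+2)×(d+2)} with A_{0,0} = 1, A_{i,l} = H_{l,i} for i ∈ [m], l ∈ [d], A_{m+1,d+1} = 1 and all other entries zero satisfies A·B_{ℳ'} = B_ℳ; in particular ℳ' covers ℳ. -/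
open Matrix

/-- `ℳ'` (with transitions `μ'`) covers `ℳ` (with transitions `μ`) iff there is a
row-stochastic matrix `C` with `C · B_{ℳ'} = B_ℳ`. -/
def lmcCovers {A S S' : Type} [Fintype S] [DecidableEq S] [Fintype S'] [DecidableEq S']
    (μ' : A → Matrix S' S' ℝ) (μ : A → Matrix S S ℝ) : Prop :=
  ∃ C : S → S' → ℝ, (∀ i l, 0 ≤ C i l) ∧ (∀ i, ∑ l, C i l = 1) ∧
    ∀ i (w : List A), ∑ l, C i l * lmcB μ' l w = lmcB μ i w

/-- The LMC `ℳ'` obtained from an NMF `M = W · H`: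
`μ'(a_i)_{0,l} = H_{l,i}/m`, `μ'(b_j)_{l,d+1} = W_{j,l}`, `μ'(✓)_{d+1,d+1} = 1`,
otherwise `0`. -/
noncomputable def lmcMu' {n m d : ℕ}
    (W : Matrix (Fin n) (Fin d) ℝ) (H : Matrix (Fin d) (Fin m) ℝ) :
    (Fin m ⊕ Fin n ⊕ Unit) →
      Matrix (Unit ⊕ Fin d ⊕ Unit) (Unit ⊕ Fin d ⊕ Unit) ℝ
  | Sum.inl i => Matrix.of fun p q =>
      match p, q with
      | Sum.inl _, Sum.inr (Sum.inl l) => H l i / (m : ℝ)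
      | _, _ => 0
  | Sum.inr (Sum.inl j) => Matrix.of fun p q =>
      match p, q with
      | Sum.inr (Sum.inl l), Sum.inr (Sum.inr _) => W j l
      | _, _ => 0
  | Sum.inr (Sum.inr _) => Matrix.of fun p q =>
      match p, q with
      | Sum.inr (Sum.inr _), Sum.inr (Sum.inr _) => 1
      | _, _ => 0

/-- The coupling matrix `A ∈ ℝ_+^{(m+2)×(d+2)}` with `A_{0,0} = 1`, `A_{i,l} = H_{l,i}`
for `i ∈ [m]`, `l ∈ [d]`, `A_{m+1,d+1} = 1`, and all other entries zero. -/
def lmcCoupling {m d : ℕ} (H : Matrix (Fin d) (Fin m) ℝ) :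
    (Unit ⊕ Fin m ⊕ Unit) → (Unit ⊕ Fin d ⊕ Unit) → ℝ :=
  fun p q =>
    match p, q with
    | Sum.inl _, Sum.inl _ => 1
    | Sum.inr (Sum.inl i), Sum.inr (Sum.inl l) => H l i
    | Sum.inr (Sum.inr _), Sum.inr (Sum.inr _) => 1
    | _, _ => 0

/-!
The coupling `A = diag(1, Hᵀ, 1)` has row sums `1` and satisfies `A · μ'(σ) = μ(σ) · A` for every
letter `σ`, so it carries the columns of `B_ℳ'` to those of `B_ℳ`. The columns of `B_ℳ'` span the
row space of `diag(1, W, 1)`: every `μ'(σ)` maps into that row space, the letters `b_j` and `✓`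
produce all rows but the first, and the column of `ε`, being the all-ones vector, is the sum of
all the rows because `W` is column-stochastic.
-/

theorem finrank_submodule_prod {K V V' : Type*} [DivisionRing K] [AddCommGroup V] [Module K V]
    [FiniteDimensional K V] [AddCommGroup V'] [Module K V'] [FiniteDimensional K V']
    (p : Submodule K V) (q : Submodule K V') :
    Module.finrank K (p.prod q) = Module.finrank K p + Module.finrank K q := by
  have range_eq : LinearMap.range (p.subtype.prodMap q.subtype) = p.prod q := by
    rw [LinearMap.range_prodMap, p.range_subtype, q.range_subtype]
  rw [← range_eq, LinearMap.finrank_range_of_inj (p.injective_subtype.prodMap q.injective_subtype),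
    Module.finrank_prod]

theorem rank_fromBlocks_zero₁₂_zero₂₁ {K m₁ m₂ n₁ n₂ : Type*} [Field K] [Finite m₁] [Finite m₂]
    [Fintype n₁] [Fintype n₂] (A : Matrix m₁ n₁ K) (B : Matrix m₂ n₂ K) :
    (fromBlocks A 0 0 B).rank = A.rank + B.rank := by
  let e := LinearEquiv.sumArrowLequivProdArrow m₁ m₂ K K
  let f := LinearEquiv.sumArrowLequivProdArrow n₁ n₂ K K
  have conj : e.toLinearMap ∘ₗ (fromBlocks A 0 0 B).mulVecLin =
      A.mulVecLin.prodMap B.mulVecLin ∘ₗ f.toLinearMap := by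
    refine LinearMap.ext fun x => ?_
    change ((fromBlocks A 0 0 B *ᵥ x) ∘ Sum.inl, (fromBlocks A 0 0 B *ᵥ x) ∘ Sum.inr) =
      (A *ᵥ (x ∘ Sum.inl), B *ᵥ (x ∘ Sum.inr))
    simp [fromBlocks_mulVec]
  have map_range : (LinearMap.range (fromBlocks A 0 0 B).mulVecLin).map e.toLinearMap =
      (LinearMap.range A.mulVecLin).prod (LinearMap.range B.mulVecLin) := by
    rw [← LinearMap.range_comp, conj, LinearMap.range_comp_of_range_eq_top _ f.range,
      LinearMap.range_prodMap]
  rw [rank, ← LinearEquiv.finrank_map_eq e, map_range, finrank_submodule_prod, rank, rank]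

section Bordered

variable {R κ ι : Type*}

/-- The block-diagonal matrix `diag(1, X, 1)`. It describes both the coupling of the two chains
(`X = Hᵀ`) and generators for the backward columns of `ℳ'` (the rows, for `X = W`). -/
def bordered [Zero R] [One R] (X : Matrix κ ι R) :
    Matrix (Unit ⊕ κ ⊕ Unit) (Unit ⊕ ι ⊕ Unit) R :=
  fromBlocks 1 0 0 (fromBlocks X 0 0 1)

theorem bordered_nonneg [Zero R] [One R] [Preorder R] [ZeroLEOneClass R] {X : Matrix κ ι R}
    (hX : ∀ k i, 0 ≤ X k i) (p q) : 0 ≤ bordered X p q := by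
  rcases p with _ | k | _ <;> rcases q with _ | i | _ <;> simp [bordered, hX]

theorem sum_bordered_apply [AddCommMonoidWithOne R] [Fintype ι] {X : Matrix κ ι R}
    (hX : ∀ k, ∑ i, X k i = 1) (p) : ∑ q, bordered X p q = 1 := by
  rcases p with _ | k | _ <;> simp [bordered, hX]

theorem sum_row_bordered [AddCommMonoidWithOne R] [Fintype κ] {X : Matrix κ ι R}
    (hX : ∀ i, ∑ k, X k i = 1) : ∑ p, (bordered X).row p = 1 := by
  ext (_ | i | _) <;> simp [bordered, hX]

theorem rank_bordered [Field R] [Finite κ] [Fintype ι] (X : Matrix κ ι R) :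
    (bordered X).rank = X.rank + 2 := by
  rw [bordered, rank_fromBlocks_zero₁₂_zero₂₁, rank_fromBlocks_zero₁₂_zero₂₁, rank_one,
    Fintype.card_unit]
  omega

end Bordered

section BackwardColumns

variable {A S S' : Type} [Fintype S] [DecidableEq S] [Fintype S'] [DecidableEq S']

/-- The column `μ(w) 𝟙` of the backward matrix indexed by the word `w`. -/
noncomputable def lmcCol (μ : A → Matrix S S ℝ) (w : List A) : S → ℝ :=
  fun i => lmcB μ i w

theorem lmcCol_eq_mulVec_one (μ : A → Matrix S S ℝ) (w : List A) :
    lmcCol μ w = lmcWord μ w *ᵥ 1 := by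
  ext i
  simp [lmcCol, lmcB, mulVec, dotProduct]

theorem lmcCol_nil (μ : A → Matrix S S ℝ) : lmcCol μ [] = 1 := by
  simp [lmcCol_eq_mulVec_one, lmcWord]

theorem lmcCol_cons (μ : A → Matrix S S ℝ) (a : A) (w : List A) :
    lmcCol μ (a :: w) = μ a *ᵥ lmcCol μ w := by
  simp [lmcCol_eq_mulVec_one, lmcWord]

theorem lmcCol_singleton (μ : A → Matrix S S ℝ) (a : A) : lmcCol μ [a] = μ a *ᵥ 1 := by
  rw [lmcCol_cons, lmcCol_nil]

theorem mulVec_lmcCol_of_intertwining {μ : A → Matrix S S ℝ} {μ' : A → Matrix S' S' ℝ}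
    {C : Matrix S S' ℝ} (hC : ∀ i, ∑ j, C i j = 1) (hcomm : ∀ a, C * μ' a = μ a * C) (w : List A) :
    C *ᵥ lmcCol μ' w = lmcCol μ w := by
  induction w with
  | nil =>
    ext i
    simp [lmcCol_nil, mulVec, dotProduct, hC]
  | cons a w ih => rw [lmcCol_cons, lmcCol_cons, mulVec_mulVec, hcomm, ← mulVec_mulVec, ih]

theorem span_range_lmcCol_le {μ : A → Matrix S S ℝ} {p : Submodule ℝ (S → ℝ)}
    (one_mem : 1 ∈ p) (mulVec_mem : ∀ a, ∀ v ∈ p, μ a *ᵥ v ∈ p) :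
    Submodule.span ℝ (Set.range (lmcCol μ)) ≤ p := by
  rw [Submodule.span_le]
  rintro _ ⟨w, rfl⟩
  induction w with
  | nil => rwa [lmcCol_nil]
  | cons a w ih =>
    rw [lmcCol_cons]
    exact mulVec_mem a _ ih

end BackwardColumns

section Factorization

variable {n m d : ℕ} (W : Matrix (Fin n) (Fin d) ℝ) (H : Matrix (Fin d) (Fin m) ℝ)

theorem lmcCoupling_apply (p q) : lmcCoupling H p q = bordered Hᵀ p q := by
  rcases p with _ | i | _ <;> rcases q with _ | l | _ <;> simp [lmcCoupling, bordered]

theorem bordered_transpose_mul_lmcMu' (a : Fin m ⊕ Fin n ⊕ Unit) :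
    bordered Hᵀ * lmcMu' W H a = lmcMu (W * H) a * bordered Hᵀ := by
  ext p q
  rcases a with i | j | _ <;> rcases p with _ | i' | _ <;> rcases q with _ | l | _ <;>
    simp [bordered, lmcMu, lmcMu', mul_apply, mul_comm, div_eq_mul_inv, one_apply]

theorem lmcMu'_inl_mulVec (i : Fin m) (v : Unit ⊕ Fin d ⊕ Unit → ℝ) :
    lmcMu' W H (Sum.inl i) *ᵥ v =
      (∑ l, H l i / m * v (Sum.inr (Sum.inl l))) • (bordered W).row (Sum.inl ()) := by
  ext (_ | l | _) <;> simp [lmcMu', bordered, mulVec, dotProduct]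

theorem lmcMu'_inr_mulVec (k : Fin n ⊕ Unit) (v : Unit ⊕ Fin d ⊕ Unit → ℝ) :
    lmcMu' W H (Sum.inr k) *ᵥ v =
      v (Sum.inr (Sum.inr ())) • (bordered W).row (Sum.inr k) := by
  rcases k with j | _ <;> ext (_ | l | _) <;>
    simp [lmcMu', bordered, mulVec, dotProduct, mul_comm]

variable {W}

theorem span_range_lmcCol_lmcMu'_le (hW : ∀ l, ∑ j, W j l = 1) :
    Submodule.span ℝ (Set.range (lmcCol (lmcMu' W H))) ≤
      Submodule.span ℝ (Set.range (bordered W).row) := by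
  have row_mem (p) : (bordered W).row p ∈ Submodule.span ℝ (Set.range (bordered W).row) :=
    Submodule.subset_span ⟨p, rfl⟩
  refine span_range_lmcCol_le ?_ ?_
  · rw [← sum_row_bordered hW]
    exact Submodule.sum_mem _ fun p _ => row_mem p
  · rintro (i | k) v -
    · rw [lmcMu'_inl_mulVec]
      exact Submodule.smul_mem _ _ (row_mem _)
    · rw [lmcMu'_inr_mulVec]
      exact Submodule.smul_mem _ _ (row_mem _)

theorem span_range_row_bordered_le (hW : ∀ l, ∑ j, W j l = 1) :
    Submodule.span ℝ (Set.range (bordered W).row) ≤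
      Submodule.span ℝ (Set.range (lmcCol (lmcMu' W H))) := by
  have col_mem (w) :
      lmcCol (lmcMu' W H) w ∈ Submodule.span ℝ (Set.range (lmcCol (lmcMu' W H))) :=
    Submodule.subset_span ⟨w, rfl⟩
  have col_inr (k) : lmcCol (lmcMu' W H) [Sum.inr k] = (bordered W).row (Sum.inr k) := by
    rw [lmcCol_singleton, lmcMu'_inr_mulVec, Pi.one_apply, one_smul]
  have row_inl : (bordered W).row (Sum.inl ()) =
      lmcCol (lmcMu' W H) [] - ∑ k, lmcCol (lmcMu' W H) [Sum.inr k] := by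
    simp only [lmcCol_nil, ← sum_row_bordered hW, Fintype.sum_sum_type, Fintype.sum_unique,
      col_inr, PUnit.default_eq_unit, add_sub_cancel_right]
  rw [Submodule.span_le]
  rintro _ ⟨_ | k, rfl⟩
  · rw [row_inl]
    exact Submodule.sub_mem _ (col_mem _) (Submodule.sum_mem _ fun k _ => col_mem _)
  · rw [← col_inr]
    exact col_mem _

theorem lmcRank_lmcMu' (hW : ∀ l, ∑ j, W j l = 1) : lmcRank (lmcMu' W H) = W.rank + 2 :=
  calc lmcRank (lmcMu' W H)
      = Module.finrank ℝ (Submodule.span ℝ (Set.range (lmcCol (lmcMu' W H)))) := rfl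
    _ = (bordered W).rank := by
        rw [rank_eq_finrank_span_row, le_antisymm (span_range_lmcCol_lmcMu'_le H hW)
          (span_range_row_bordered_le H hW)]
    _ = W.rank + 2 := rank_bordered W

end Factorization

theorem stmt6_general {n m d : ℕ} (M : Matrix (Fin n) (Fin m) ℝ)
    (W : Matrix (Fin n) (Fin d) ℝ) (H : Matrix (Fin d) (Fin m) ℝ)
    (hWcs : ∀ l : Fin d, ∑ j, W j l = 1)
    (hHnn : ∀ l i, 0 ≤ H l i) (hHcs : ∀ i : Fin m, ∑ l, H l i = 1)
    (hfac : M = W * H) :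
    lmcRank (lmcMu' W H) = W.rank + 2 ∧
    (∀ p q, 0 ≤ lmcCoupling H p q) ∧
    (∀ p, ∑ q, lmcCoupling H p q = 1) ∧
    (∀ p (w : List (Fin m ⊕ Fin n ⊕ Unit)),
        ∑ l, lmcCoupling H p l * lmcB (lmcMu' W H) l w = lmcB (lmcMu M) p w) ∧
    lmcCovers (lmcMu' W H) (lmcMu M) := by
  subst hfac
  simp only [lmcCoupling_apply]
  have nonneg : ∀ p q, 0 ≤ bordered Hᵀ p q := bordered_nonneg fun i l => hHnn l i
  have row_sum : ∀ p, ∑ q, bordered Hᵀ p q = 1 := sum_bordered_apply hHcs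
  have coupling (p) (w : List (Fin m ⊕ Fin n ⊕ Unit)) :
      ∑ l, bordered Hᵀ p l * lmcB (lmcMu' W H) l w = lmcB (lmcMu (W * H)) p w :=
    congrFun (mulVec_lmcCol_of_intertwining row_sum (bordered_transpose_mul_lmcMu' W H) w) p
  exact ⟨lmcRank_lmcMu' H hWcs, nonneg, row_sum, coupling, bordered Hᵀ, nonneg, row_sum, coupling⟩

/-- If `M = W · H` with `M`, `W`, `H` column-stochastic and nonnegative, then the LMC
`ℳ'` built from the factorization has rank `rank(W) + 2`, the coupling matrix `A` is
row-stochastic and satisfies `A · B_{ℳ'} = B_ℳ`; in particular `ℳ'` covers `ℳ`. -/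
theorem stmt6 {n m d : ℕ} (hm : 0 < m)
    (M : Matrix (Fin n) (Fin m) ℚ)
    (hMnn : ∀ j i, 0 ≤ M j i) (hMcs : ∀ i : Fin m, ∑ j, M j i = 1)
    (W : Matrix (Fin n) (Fin d) ℝ) (H : Matrix (Fin d) (Fin m) ℝ)
    (hWnn : ∀ j l, 0 ≤ W j l) (hWcs : ∀ l : Fin d, ∑ j, W j l = 1)
    (hHnn : ∀ l i, 0 ≤ H l i) (hHcs : ∀ i : Fin m, ∑ l, H l i = 1)
    (hfac : M.map ((↑) : ℚ → ℝ) = W * H) :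
    lmcRank (lmcMu' W H) = W.rank + 2 ∧
    (∀ p q, 0 ≤ lmcCoupling H p q) ∧
    (∀ p, ∑ q, lmcCoupling H p q = 1) ∧
    (∀ p (w : List (Fin m ⊕ Fin n ⊕ Unit)),
        ∑ l, lmcCoupling H p l * lmcB (lmcMu' W H) l w
          = lmcB (lmcMu (M.map ((↑) : ℚ → ℝ))) p w) ∧
    lmcCovers (lmcMu' W H) (lmcMu (M.map ((↑) : ℚ → ℝ))) :=
  stmt6_general _ W H hWcs hHnn hHcs hfac
end
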